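/- For every δ > 0 there exists N such that for all n ≥ N, the probability that det M_n = 0 is at most δ. (That is, P(det M_n = 0) = o(1) as n → ∞.) -/

import Mathlib

/-- The random sign matrix determined by a Boolean matrix: entries are `+1` or `-1`. -/
noncomputable def signMatrix (n : ℕ) (b : Fin n → Fin n → Bool) : Matrix (Fin n) (Fin n) ℝ :=
  Matrix.of fun i j => if b i j then (1 : ℝ) else -1

/-!
If the rows of a square matrix are dependent, some row `k` lies in the span `V` of the earlier ones.
A subspace of dimension `d` contains at most `2 ^ d` sign vectors, because `d` suitable coordinates
determine its elements; so the rows other than the last `C` contribute at most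
`∑ k < n - C, 2 ^ (k - n) ≤ 2 ^ (-C)`. With probability tending to `1`, the first `n - C` rows show
all `2 ^ m` sign patterns on every `m` columns. Then a nonzero vector `v` normal to `V` has at least
`m` nonzero coordinates: otherwise some row would match the signs of `v` on its support and not be
orthogonal to it. By the Littlewood–Offord inequality each of the last `C` rows is then orthogonal
to `v` with probability `O(1 / √m)`. Choose `C` large, then `m`, then `n`.
-/

open Filter Finset Function Matrix Submodule
open scoped Topology

section Density

lemma dens_filter_exists_mem_le_sum {α γ : Type*} [Fintype α] (s : Finset γ) (P : γ → α → Prop)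
    [∀ c, DecidablePred (P c)] [DecidablePred fun a => ∃ c ∈ s, P c a] :
    dens {a | ∃ c ∈ s, P c a} ≤ ∑ c ∈ s, dens {a | P c a} := by
  classical
  exact (dens_le_dens fun a ha => by simpa using ha).trans dens_biUnion_le

variable {ι : Type*} [DecidableEq ι] [Fintype ι] {π : ι → Type*} [∀ i, Fintype (π i)]

lemma dens_filter_forall_mem_eq_prod [∀ i, Nonempty (π i)] [∀ i, DecidableEq (π i)]
    (S : Finset ι) (A : ∀ i, Finset (π i)) :
    dens {x : ∀ i, π i | ∀ i ∈ S, x i ∈ A i} = ∏ i ∈ S, dens (A i) := by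
  have hpi : ({x : ∀ i, π i | ∀ i ∈ S, x i ∈ A i} : Finset _) =
      Fintype.piFinset fun i => if i ∈ S then A i else univ := by
    ext x
    simp only [mem_filter_univ, Fintype.mem_piFinset]
    refine forall_congr' fun i => ?_
    split_ifs with hi <;> simp [hi]
  calc dens {x : ∀ i, π i | ∀ i ∈ S, x i ∈ A i}
      = ∏ i, dens (if i ∈ S then A i else univ) := by
        simp [hpi, dens_eq_card_div_card, prod_div_distrib]
    _ = ∏ i ∈ S, dens (A i) := by simp only [apply_ite dens, dens_univ, prod_ite_mem, univ_inter]

lemma sum_card_filter_updateFinset (S : Finset ι) (P : (∀ i, π i) → Prop) [DecidablePred P] :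
    ∑ b, #{x : ∀ i : S, π i | P (updateFinset b S x)} =
      #{b | P b} * Fintype.card (∀ i : S, π i) := by
  -- Resampling the coordinates in `S` exchanges them with the fresh ones, an involution.
  let swap : (∀ i, π i) × (∀ i : S, π i) → (∀ i, π i) × (∀ i : S, π i) :=
    fun q => (updateFinset q.1 S q.2, S.restrict q.1)
  have hswap : Involutive swap := fun q => Prod.ext
    ((updateFinset_updateFinset_of_subset subset_rfl _ _ _).trans (updateFinset_restrict _))
    (restrict_updateFinset _ _)
  calc ∑ b, #{x : ∀ i : S, π i | P (updateFinset b S x)}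
      = ∑ q, if P (swap q).1 then 1 else 0 := by
        simp only [card_filter, Fintype.sum_prod_type, swap]
    _ = ∑ b, ∑ _x : ∀ i : S, π i, if P b then 1 else 0 :=
        (Equiv.sum_comp hswap.toPerm fun q => if P q.1 then 1 else 0).trans
          (Fintype.sum_prod_type _)
    _ = #{b | P b} * Fintype.card (∀ i : S, π i) := by
        simp only [sum_const, card_univ, smul_eq_mul, card_filter, sum_mul, mul_comm]

lemma dens_filter_le_of_updateFinset (S : Finset ι) (P : (∀ i, π i) → Prop) [DecidablePred P]
    {c : ℚ≥0} (h : ∀ b, dens {x : ∀ i : S, π i | P (updateFinset b S x)} ≤ c) :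
    dens {b | P b} ≤ c := by
  rcases isEmpty_or_nonempty (∀ i, π i) with hπ | ⟨⟨b₀⟩⟩
  · simp [dens_eq_card_div_card]
  have : Nonempty (∀ i : S, π i) := ⟨S.restrict b₀⟩
  have : Nonempty (∀ i, π i) := ⟨b₀⟩
  have hS : (0 : ℚ≥0) < Fintype.card (∀ i : S, π i) := by exact_mod_cast Fintype.card_pos
  refine div_le_of_le_mul₀ (by positivity) (by positivity) (le_of_mul_le_mul_right ?_ hS)
  calc (#{b | P b} : ℚ≥0) * Fintype.card (∀ i : S, π i)
      = ∑ b, (#{x : ∀ i : S, π i | P (updateFinset b S x)} : ℚ≥0) := by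
        exact_mod_cast (sum_card_filter_updateFinset S P).symm
    _ ≤ ∑ _b : ∀ i, π i, c * Fintype.card (∀ i : S, π i) := by
        gcongr with b
        rw [← dens_mul_card]
        gcongr
        exact h b
    _ = c * Fintype.card (∀ i, π i) * Fintype.card (∀ i : S, π i) := by
        rw [sum_const, nsmul_eq_mul, card_univ]; ring

lemma dens_filter_le_of_update (k : ι) (P : (∀ i, π i) → Prop) [DecidablePred P] {c : ℚ≥0}
    (h : ∀ b, dens {x : π k | P (update b k x)} ≤ c) : dens {b | P b} ≤ c := by
  refine dens_filter_le_of_updateFinset {k} P fun b => le_of_eq_of_le ?_ (h b)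
  rw [← dens_map_equiv (Equiv.piUnique fun i : ({k} : Finset ι) => π i)]
  congr 1
  ext x
  simp [update_eq_updateFinset, map_filter]

end Density

section LinearAlgebra

lemma exists_card_le_finrank_injOn_restrict {K ι : Type*} [Field K] [Finite ι]
    (V : Submodule K (ι → K)) :
    ∃ S : Finset ι, #S ≤ Module.finrank K V ∧ Set.InjOn S.restrict (V : Set (ι → K)) := by
  let coord (i : ι) : Module.Dual K V := (LinearMap.proj i).comp V.subtype
  obtain ⟨B, -, -, hspan, hB⟩ := exists_linearIndepOn_extension (v := coord)
    (linearIndepOn_empty K coord) (Set.empty_subset Set.univ)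
  have := Fintype.ofFinite B
  refine ⟨B.toFinset, ?_, fun x hx y hy hxy => funext fun i => ?_⟩
  · rw [Set.toFinset_card, ← Subspace.dual_finrank_eq]
    exact hB.linearIndependent.fintype_card_le_finrank
  · let w : V := ⟨x, hx⟩ - ⟨y, hy⟩
    have hker : span K (coord '' B) ≤ LinearMap.ker (Module.Dual.eval K V w) := by
      rw [span_le]
      rintro _ ⟨j, hj, rfl⟩
      simpa [coord, w, sub_eq_zero] using congrFun hxy ⟨j, by simpa using hj⟩
    simpa [coord, w, sub_eq_zero] using hker (hspan ⟨i, Set.mem_univ i, rfl⟩)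

lemma dens_filter_comp_mem_submodule_le {K ι α : Type*} [Field K] [Fintype ι] [DecidableEq ι]
    [Fintype α] [Nonempty α] {f : α → K} (hf : Injective f) (V : Submodule K (ι → K))
    [DecidablePred fun x : ι → α => f ∘ x ∈ V] :
    dens {x : ι → α | f ∘ x ∈ V} ≤
      (Fintype.card α : ℚ≥0) ^ Module.finrank K V / (Fintype.card α : ℚ≥0) ^ Fintype.card ι := by
  obtain ⟨S, hS, hinj⟩ := exists_card_le_finrank_injOn_restrict V
  have hcard : #{x : ι → α | f ∘ x ∈ V} ≤ #(univ : Finset (S → α)) := by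
    refine card_le_card_of_injOn S.restrict (fun _ _ => mem_coe.2 (mem_univ _)) ?_
    intro x hx y hy hxy
    refine hf.comp_left (hinj (by simpa using hx) (by simpa using hy) ?_)
    exact congrArg (f ∘ ·) hxy
  rw [dens_eq_card_div_card, Fintype.card_fun, Nat.cast_pow]
  gcongr
  calc (#{x : ι → α | f ∘ x ∈ V} : ℚ≥0) ≤ (Fintype.card α : ℚ≥0) ^ #S := by
        exact_mod_cast hcard.trans_eq (by simp)
    _ ≤ (Fintype.card α : ℚ≥0) ^ Module.finrank K V :=
        pow_le_pow_right₀ (by exact_mod_cast Fintype.card_pos) hS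

lemma exists_mem_span_image_Iio_of_not_linearIndependent {K M ι : Type*} [DivisionRing K]
    [AddCommGroup M] [Module K M] [LinearOrder ι] {v : ι → M} (h : ¬LinearIndependent K v) :
    ∃ k, v k ∈ span K (v '' Set.Iio k) := by
  obtain ⟨g, hg, hg0⟩ := not_linearIndependent_iff_finsupp.1 h
  obtain ⟨k, hk, hmax⟩ := exists_max_image g.support id (Finsupp.support_nonempty_iff.2 hg0)
  refine ⟨k, ?_⟩
  rw [Finsupp.sum, ← add_sum_erase _ _ hk] at hg
  rw [← smul_mem_iff _ (Finsupp.mem_support_iff.1 hk), eq_neg_of_add_eq_zero_left hg]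
  refine neg_mem (sum_mem fun i hi => smul_mem _ _ (subset_span ⟨i, ?_, rfl⟩))
  exact lt_of_le_of_ne (hmax i (mem_of_mem_erase hi)) (ne_of_mem_erase hi)

lemma exists_ne_zero_forall_mem_dotProduct_eq_zero {K ι : Type*} [Field K] [Fintype ι]
    {V : Submodule K (ι → K)} (hV : V < ⊤) :
    ∃ v : ι → K, v ≠ 0 ∧ ∀ w ∈ V, v ⬝ᵥ w = 0 := by
  classical
  obtain ⟨f, hf, hker⟩ := exists_le_ker_of_lt_top V hV
  refine ⟨(dotProductEquiv K ι).symm f, by simpa using hf, fun w hw => ?_⟩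
  rw [← dotProductEquiv_apply_apply, LinearEquiv.apply_symm_apply]
  exact hker hw

end LinearAlgebra

section LittlewoodOfford

/-- The sign encoded by a Boolean, `true` standing for `+1` as in `signMatrix`. The sign vectors are
the compositions `boolSign ∘ x`. -/
noncomputable def boolSign (a : Bool) : ℝ := if a then 1 else -1

lemma boolSign_injective : Injective boolSign := by
  rintro (_ | _) (_ | _) h <;> first | rfl | norm_num [boolSign] at h

lemma mul_boolSign_eq_ite_abs (c : ℝ) (a : Bool) :
    c * boolSign a = if a = decide (0 < c) then |c| else -|c| := by
  rcases lt_or_ge 0 c with hc | hc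
  · cases a <;> simp [boolSign, hc, abs_of_pos]
  · cases a <;> simp [boolSign, hc.not_gt, abs_of_nonpos hc]

variable {ι : Type*} [Fintype ι]

lemma card_filter_eq_le_choose_of_strictMono {β : Type*} [PartialOrder β] [DecidableEq β]
    {f : Finset ι → β} (hf : StrictMono f) (c : β) :
    #{s | f s = c} ≤ (Fintype.card ι).choose (Fintype.card ι / 2) := by
  refine IsAntichain.sperner fun s hs t ht hne hst => ?_
  have hlt := hf (lt_of_le_of_ne hst hne)
  simp_all

variable [DecidableEq ι]

lemma strictMono_sum_ite_mem_neg {w : ι → ℝ} (hw : ∀ j, 0 < w j) :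
    StrictMono fun s : Finset ι => ∑ j, if j ∈ s then w j else -w j := by
  intro s t hst
  obtain ⟨i, hit, his⟩ := exists_of_ssubset hst
  have hneg (j : ι) : -w j < w j := neg_lt_self (hw j)
  refine sum_lt_sum (fun j _ => ?_) ⟨i, mem_univ i, by simp [hit, his, hneg]⟩
  by_cases hjs : j ∈ s
  · simp [hjs, hst.1 hjs]
  · simp only [hjs, if_false]
    split_ifs <;> simp [(hneg j).le]

lemma dens_filter_dotProduct_boolSign_comp_eq_le {v : ι → ℝ} (hv : ∀ j, v j ≠ 0) (c : ℝ) :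
    dens {x : ι → Bool | v ⬝ᵥ (boolSign ∘ x) = c} ≤
      ((Fintype.card ι).choose (Fintype.card ι / 2) : ℚ≥0) / 2 ^ Fintype.card ι := by
  let agree : (ι → Bool) → Finset ι := fun x => {j | x j = decide (0 < v j)}
  have hagree : Injective agree := by
    intro x y h
    ext1 j
    have hj : x j = decide (0 < v j) ↔ y j = decide (0 < v j) := by
      simpa [agree] using Finset.ext_iff.1 h j
    generalize decide (0 < v j) = a at hj
    revert hj
    cases x j <;> cases y j <;> cases a <;> simp
  have hsum : ∀ x, v ⬝ᵥ (boolSign ∘ x) = ∑ j, if j ∈ agree x then |v j| else -|v j| := by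
    simp [agree, dotProduct, mul_boolSign_eq_ite_abs]
  have hcard : #{x : ι → Bool | v ⬝ᵥ (boolSign ∘ x) = c} ≤
      #{s : Finset ι | ∑ j, (if j ∈ s then |v j| else -|v j|) = c} :=
    card_le_card_of_injOn agree (fun x hx => by simpa [hsum] using hx) hagree.injOn
  rw [dens_eq_card_div_card, Fintype.card_fun, Fintype.card_bool, Nat.cast_pow, Nat.cast_ofNat]
  gcongr
  exact hcard.trans (card_filter_eq_le_choose_of_strictMono
    (strictMono_sum_ite_mem_neg fun j => abs_pos.2 (hv j)) c)

lemma dens_filter_dotProduct_boolSign_comp_eq_le_of_ne_zero_on {v : ι → ℝ} {S : Finset ι}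
    (hv : ∀ j ∈ S, v j ≠ 0) (c : ℝ) :
    dens {x : ι → Bool | v ⬝ᵥ (boolSign ∘ x) = c} ≤ ((#S).choose (#S / 2) : ℚ≥0) / 2 ^ #S := by
  refine dens_filter_le_of_updateFinset S _ fun b => ?_
  have hsplit : ∀ x : S → Bool, v ⬝ᵥ (boolSign ∘ updateFinset b S x) =
      S.restrict v ⬝ᵥ (boolSign ∘ x) + ∑ j ∈ Sᶜ, v j * boolSign (b j) := by
    intro x
    rw [dotProduct, ← sum_add_sum_compl S, ← sum_coe_sort S]
    congr 1
    · simp [dotProduct, updateFinset]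
    · exact sum_congr rfl fun j hj => by simp [updateFinset, mem_compl.1 hj]
  simp only [hsplit, ← eq_sub_iff_add_eq]
  simpa using dens_filter_dotProduct_boolSign_comp_eq_le (v := S.restrict v)
    (fun j => hv j j.2) (c - ∑ j ∈ Sᶜ, v j * boolSign (b j))

end LittlewoodOfford

section Asymptotics

lemma centralBinom_sq_mul_le (t : ℕ) : t.centralBinom ^ 2 * (2 * t + 1) ≤ 16 ^ t := by
  induction t with
  | zero => simp
  | succ t ih =>
    have h := Nat.succ_mul_centralBinom_succ t
    refine Nat.le_of_mul_le_mul_left ?_ (show 0 < (t + 1) ^ 2 by positivity)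
    calc (t + 1) ^ 2 * ((t + 1).centralBinom ^ 2 * (2 * (t + 1) + 1))
        = ((t + 1) * (t + 1).centralBinom) ^ 2 * (2 * t + 3) := by ring
      _ = 4 * (2 * t + 1) * (2 * t + 3) * (t.centralBinom ^ 2 * (2 * t + 1)) := by rw [h]; ring
      _ ≤ 4 * (2 * t + 1) * (2 * t + 3) * 16 ^ t := by gcongr
      _ ≤ 16 * (t + 1) ^ 2 * 16 ^ t := Nat.mul_le_mul_right _ (by nlinarith)
      _ = (t + 1) ^ 2 * 16 ^ (t + 1) := by ring

lemma choose_half_sq_mul_le (m : ℕ) : m.choose (m / 2) ^ 2 * (m + 1) ≤ 4 ^ m := by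
  obtain ⟨t, rfl | rfl⟩ := m.even_or_odd'
  · rw [Nat.mul_div_cancel_left t two_pos, ← Nat.centralBinom_eq_two_mul_choose, pow_mul]
    exact centralBinom_sq_mul_le t
  · have hdouble : (t + 1).centralBinom = 2 * (2 * t + 1).choose t := by
      rw [Nat.centralBinom_eq_two_mul_choose, mul_add_one, Nat.choose_succ_succ',
        Nat.choose_symm_half, ← two_mul]
    have h := centralBinom_sq_mul_le (t + 1)
    have hpow : 4 ^ (2 * t + 1) = 4 * 16 ^ t := by rw [pow_succ', pow_mul]; norm_num
    rw [hdouble, pow_succ' 16] at h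
    rw [show (2 * t + 1) / 2 = t by omega, hpow]
    nlinarith

lemma tendsto_choose_half_div_two_pow :
    Tendsto (fun m : ℕ => (m.choose (m / 2) : ℝ) / 2 ^ m) atTop (𝓝 0) := by
  have hlim : Tendsto (fun m : ℕ => √(1 / ((m : ℝ) + 1))) atTop (𝓝 0) := by
    simpa using (tendsto_one_div_add_atTop_nhds_zero_nat (𝕜 := ℝ)).sqrt
  refine squeeze_zero (fun m => by positivity) (fun m => Real.le_sqrt_of_sq_le ?_) hlim
  have h : (m.choose (m / 2) : ℝ) ^ 2 * (m + 1) ≤ 4 ^ m := mod_cast choose_half_sq_mul_le m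
  have hpow : ((2 : ℝ) ^ m) ^ 2 = 4 ^ m := by rw [← pow_mul, mul_comm, pow_mul]; norm_num
  rwa [div_pow, hpow, div_le_div_iff₀ (by positivity) (by positivity), one_mul]

lemma tendsto_eval_mul_const_pow_of_abs_lt_one (p : Polynomial ℝ) {q : ℝ} (hq : |q| < 1) :
    Tendsto (fun n : ℕ => p.eval (n : ℝ) * q ^ n) atTop (𝓝 0) := by
  have hterm (i : ℕ) : Tendsto (fun n : ℕ => p.coeff i * ((n : ℝ) ^ i * q ^ n)) atTop (𝓝 0) := by
    simpa using (tendsto_pow_const_mul_const_pow_of_abs_lt_one i hq).const_mul (p.coeff i)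
  simpa [Polynomial.eval_eq_sum_range, sum_mul, mul_assoc] using
    tendsto_finsetSum (range (p.natDegree + 1)) fun i _ => hterm i

lemma tendsto_add_choose_mul_const_pow_of_lt_one (C m : ℕ) {q : ℝ} (hq₀ : 0 ≤ q) (hq₁ : q < 1) :
    Tendsto (fun r : ℕ => ((r + C).choose m : ℝ) * q ^ r) atTop (𝓝 0) := by
  have hpoly := tendsto_eval_mul_const_pow_of_abs_lt_one
    ((Polynomial.X + (C : Polynomial ℝ)) ^ m) (abs_lt.2 ⟨by linarith, hq₁⟩)
  refine squeeze_zero (fun r => by positivity) (fun r => ?_) hpoly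
  gcongr
  simpa using (Nat.cast_le (α := ℝ)).2 (Nat.choose_le_pow (r + C) m)

end Asymptotics

section Universal

variable {ι κ α : Type*}

/-- The rows `b i`, `i ∈ R`, exhibit every pattern of entries on every set of `m` columns. For
Boolean rows, a nonzero vector orthogonal to their sign vectors then has large support. -/
def IsUniversal (b : ι → κ → α) (R : Finset ι) (m : ℕ) : Prop :=
  ∀ S : Finset κ, #S = m → ∀ p : S → α, ∃ i ∈ R, S.restrict (b i) = p

variable {b : ι → κ → α} {R T : Finset ι} {m : ℕ}

lemma IsUniversal.mono (h : IsUniversal b R m) (hRT : R ⊆ T) : IsUniversal b T m :=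
  fun S hS p => (h S hS p).imp fun _ hi => ⟨hRT hi.1, hi.2⟩

lemma isUniversal_congr {b' : ι → κ → α} (h : ∀ i ∈ R, b i = b' i) :
    IsUniversal b R m ↔ IsUniversal b' R m := by
  refine forall₃_congr fun S _ p => exists_congr fun i => and_congr_right fun hi => ?_
  rw [h i hi]

lemma IsUniversal.le_card_filter_ne_zero [Fintype κ] {b : ι → κ → Bool} (h : IsUniversal b R m)
    (hm : m ≤ Fintype.card κ) {v : κ → ℝ} (hv : v ≠ 0)
    (horth : ∀ i ∈ R, v ⬝ᵥ (boolSign ∘ b i) = 0) : m ≤ #{j | v j ≠ 0} := by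
  by_contra! hlt
  obtain ⟨S, hsupp, hS⟩ := exists_superset_card_eq hlt.le hm
  obtain ⟨i, hi, hp⟩ := h S hS (S.restrict fun j => decide (0 < v j))
  have hsum : ∑ j, |v j| = 0 := by
    rw [← horth i hi, dotProduct]
    refine sum_congr rfl fun j _ => ?_
    by_cases hj : j ∈ S
    · have hbj : b i j = decide (0 < v j) := congrFun hp ⟨j, hj⟩
      rw [Function.comp_apply, mul_boolSign_eq_ite_abs, if_pos hbj]
    · have : v j = 0 := by simpa using fun h => hj (hsupp h)
      simp [this]
  rw [sum_eq_zero_iff_of_nonneg fun _ _ => abs_nonneg _] at hsum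
  exact hv (funext fun j => abs_eq_zero.1 (hsum j (mem_univ j)))

variable [Fintype ι] [DecidableEq ι] [Fintype κ] [DecidableEq κ] [Fintype α] [Nonempty α]

lemma dens_filter_restrict_eq [DecidableEq α] (S : Finset κ) (p : S → α) :
    dens {x : κ → α | S.restrict x = p} = (1 / Fintype.card α : ℚ≥0) ^ #S := by
  obtain ⟨a⟩ := ‹Nonempty α›
  let y : κ → α := updateFinset (fun _ => a) S p
  have hy : S.restrict y = p := restrict_updateFinset (π := fun _ => α) _ p
  calc dens {x : κ → α | S.restrict x = p}
      = dens {x : κ → α | ∀ j ∈ S, x j ∈ ({y j} : Finset α)} := by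
        simp [← hy, funext_iff]
    _ = (1 / Fintype.card α : ℚ≥0) ^ #S := by
        simp only [dens_filter_forall_mem_eq_prod S fun j => {y j}, dens_singleton, prod_const,
          one_div]

lemma dens_filter_forall_mem_restrict_ne [DecidableEq α] (R : Finset ι) (S : Finset κ) (p : S → α) :
    dens {b : ι → κ → α | ∀ i ∈ R, S.restrict (b i) ≠ p} =
      (1 - (1 / Fintype.card α : ℚ≥0) ^ #S) ^ #R := by
  have hne : dens {x : κ → α | S.restrict x ≠ p} = 1 - (1 / Fintype.card α : ℚ≥0) ^ #S := by
    rw [← dens_filter_restrict_eq S p, filter_not, dens_sdiff (filter_subset _ _), dens_univ]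
  have hprod := dens_filter_forall_mem_eq_prod R fun _ => {x : κ → α | S.restrict x ≠ p}
  simpa only [mem_filter_univ, hne, prod_const] using hprod

lemma dens_filter_not_isUniversal_le (R : Finset ι) (m : ℕ)
    [DecidablePred fun b : ι → κ → α => ¬IsUniversal b R m] :
    dens {b : ι → κ → α | ¬IsUniversal b R m} ≤
      (Fintype.card κ).choose m * Fintype.card α ^ m * (1 - (1 / Fintype.card α) ^ m) ^ #R := by
  classical
  calc dens {b : ι → κ → α | ¬IsUniversal b R m}
      ≤ dens {b : ι → κ → α | ∃ S ∈ powersetCard m univ, ∃ p ∈ (univ : Finset (S → α)),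
          ∀ i ∈ R, S.restrict (b i) ≠ p} :=
        dens_le_dens (monotone_filter_right _ fun b => by simp [IsUniversal])
    _ ≤ ∑ S ∈ powersetCard m univ, ∑ p : S → α,
          dens {b : ι → κ → α | ∀ i ∈ R, S.restrict (b i) ≠ p} :=
        (dens_filter_exists_mem_le_sum _ _).trans
          (sum_le_sum fun S _ => dens_filter_exists_mem_le_sum _ _)
    _ = ∑ S ∈ powersetCard m (univ : Finset κ),
          (Fintype.card α : ℚ≥0) ^ m * (1 - (1 / Fintype.card α) ^ m) ^ #R := by
        refine sum_congr rfl fun S hS => ?_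
        simp [dens_filter_forall_mem_restrict_ne, (mem_powersetCard.1 hS).2]
    _ = (Fintype.card κ).choose m * Fintype.card α ^ m * (1 - (1 / Fintype.card α) ^ m) ^ #R := by
        simp [card_powersetCard, mul_assoc]

end Universal

section SignMatrix

variable {ι κ : Type*}

/-- The real span of the sign vectors of the rows `b i`, `i ∈ R`. The sign matrix is
singular exactly when row `k` lies in `rowSpan b (Iio k)` for some `k`. -/
def rowSpan (b : ι → κ → Bool) (R : Finset ι) : Submodule ℝ (κ → ℝ) :=
  span ℝ ((fun i => boolSign ∘ b i) '' R)

lemma rowSpan_congr {b b' : ι → κ → Bool} {R : Finset ι} (h : ∀ i ∈ R, b i = b' i) :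
    rowSpan b R = rowSpan b' R :=
  congrArg (span ℝ) (Set.image_congr fun i hi => by simp only [h i hi])

lemma finrank_rowSpan_le (b : ι → κ → Bool) (R : Finset ι) :
    Module.finrank ℝ (rowSpan b R) ≤ #R := by
  classical
  rw [rowSpan, ← coe_image]
  exact (finrank_span_finset_le_card _).trans card_image_le

lemma IsUniversal.exists_card_eq_forall_mem_rowSpan [Fintype κ] {b : ι → κ → Bool} {R : Finset ι}
    {m : ℕ} (h : IsUniversal b R m) (hm : m ≤ Fintype.card κ) (hR : #R < Fintype.card κ) :
    ∃ (v : κ → ℝ) (S : Finset κ), #S = m ∧ (∀ j ∈ S, v j ≠ 0) ∧ ∀ w ∈ rowSpan b R, v ⬝ᵥ w = 0 := by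
  have hlt : rowSpan b R < ⊤ := lt_top_of_finrank_lt_finrank <|
    (finrank_rowSpan_le b R).trans_lt (by simpa using hR)
  obtain ⟨v, hv, horth⟩ := exists_ne_zero_forall_mem_dotProduct_eq_zero hlt
  obtain ⟨S, hS, hcard⟩ := exists_subset_card_eq (h.le_card_filter_ne_zero hm hv
    fun i hi => horth _ (subset_span (Set.mem_image_of_mem _ hi)))
  exact ⟨v, S, hcard, fun j hj => by simpa using hS hj, horth⟩

variable [Fintype ι] [DecidableEq ι] [Fintype κ] [DecidableEq κ] {R : Finset ι} {k : ι}

open scoped Classical in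
lemma dens_filter_mem_rowSpan_le (hk : k ∉ R) :
    dens {b : ι → κ → Bool | boolSign ∘ b k ∈ rowSpan b R} ≤ 2 ^ #R / 2 ^ Fintype.card κ := by
  refine dens_filter_le_of_update k _ fun b => ?_
  have hspan (x : κ → Bool) : rowSpan (update b k x) R = rowSpan b R :=
    rowSpan_congr fun i hi => update_of_ne (ne_of_mem_of_not_mem hi hk) _ _
  simp only [update_self, hspan]
  refine (dens_filter_comp_mem_submodule_le boolSign_injective (rowSpan b R)).trans ?_
  rw [Fintype.card_bool, Nat.cast_ofNat]
  gcongr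
  exacts [one_le_two, finrank_rowSpan_le b R]

open scoped Classical in
lemma dens_filter_mem_rowSpan_and_isUniversal_le (hk : k ∉ R) (hR : #R < Fintype.card κ) {m : ℕ}
    (hm : m ≤ Fintype.card κ) :
    dens {b : ι → κ → Bool | boolSign ∘ b k ∈ rowSpan b R ∧ IsUniversal b R m} ≤
      (m.choose (m / 2) : ℚ≥0) / 2 ^ m := by
  refine dens_filter_le_of_update k _ fun b => ?_
  have hrow (x : κ → Bool) : ∀ i ∈ R, update b k x i = b i :=
    fun i hi => update_of_ne (ne_of_mem_of_not_mem hi hk) _ _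
  simp only [update_self, rowSpan_congr (hrow _), isUniversal_congr (hrow _)]
  by_cases hb : IsUniversal b R m
  · obtain ⟨v, S, rfl, hv, horth⟩ := hb.exists_card_eq_forall_mem_rowSpan hm hR
    refine (dens_le_dens ?_).trans (dens_filter_dotProduct_boolSign_comp_eq_le_of_ne_zero_on hv 0)
    exact monotone_filter_right _ fun x _ hx => horth _ hx.1
  · simp [hb]

lemma exists_mem_rowSpan_Iio_of_det_eq_zero {n : ℕ} {b : Fin n → Fin n → Bool}
    (h : (signMatrix n b).det = 0) : ∃ k, boolSign ∘ b k ∈ rowSpan b (Iio k) := by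
  have hdep : ¬LinearIndependent ℝ (signMatrix n b).row := by
    rw [linearIndependent_rows_iff_isUnit, isUnit_iff_isUnit_det, h]
    exact not_isUnit_zero
  obtain ⟨k, hk⟩ := exists_mem_span_image_Iio_of_not_linearIndependent hdep
  exact ⟨k, by rwa [rowSpan, coe_Iio]⟩

open scoped Classical in
lemma sum_dens_filter_mem_rowSpan_Iio_castAdd_le (r C : ℕ) :
    ∑ i : Fin r, dens {b : Fin (r + C) → Fin (r + C) → Bool |
      boolSign ∘ b (i.castAdd C) ∈ rowSpan b (Iio (i.castAdd C))} ≤ (1 / 2) ^ C := by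
  have hgeom : ∑ i : Fin r, (2 : ℚ≥0) ^ i.val + 1 = 2 ^ r := by
    have h := geom_sum_mul_add (1 : ℚ≥0) r
    rw [mul_one, one_add_one_eq_two] at h
    rwa [Fin.sum_univ_eq_sum_range fun i => (2 : ℚ≥0) ^ i]
  calc ∑ i : Fin r, dens {b : Fin (r + C) → Fin (r + C) → Bool |
        boolSign ∘ b (i.castAdd C) ∈ rowSpan b (Iio (i.castAdd C))}
      ≤ ∑ i : Fin r, (2 ^ i.val / 2 ^ (r + C) : ℚ≥0) := by
        gcongr with i
        simpa using dens_filter_mem_rowSpan_le (κ := Fin (r + C))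
          (notMem_Iio_self (b := i.castAdd C))
    _ ≤ 2 ^ r / 2 ^ (r + C) := by
        rw [← sum_div, ← hgeom]
        gcongr
        exact le_self_add
    _ = (1 / 2) ^ C := by rw [pow_add, div_mul_cancel_left₀ (by positivity), one_div, inv_pow]

open scoped Classical in
lemma dens_filter_det_signMatrix_eq_zero_le {r C m : ℕ} (hm : m ≤ r + C) :
    dens {b | (signMatrix (r + C) b).det = 0} ≤
      (r + C).choose m * 2 ^ m * (1 - (1 / 2) ^ m) ^ r +
        ((1 / 2) ^ C + C * ((m.choose (m / 2) : ℚ≥0) / 2 ^ m)) := by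
  let R : Finset (Fin (r + C)) := univ.map (Fin.castAddEmb C)
  have hcover : univ.filter (fun b => (signMatrix (r + C) b).det = 0) ⊆
      univ.filter (fun b => ¬IsUniversal b R m) ∪ univ.filter fun b => ∃ k ∈ univ,
        boolSign ∘ b k ∈ rowSpan b (Iio k) ∧ IsUniversal b R m := by
    intro b hb
    obtain ⟨k, hk⟩ := exists_mem_rowSpan_Iio_of_det_eq_zero (mem_filter.1 hb).2
    simpa using (em (IsUniversal b R m)).symm.imp_right fun h => ⟨⟨k, hk⟩, h⟩
  refine (dens_le_dens hcover).trans <| (dens_union_le _ _).trans <| add_le_add ?_ <|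
    (dens_filter_exists_mem_le_sum _ _).trans <| (Fin.sum_univ_add _).trans_le <| add_le_add ?_ ?_
  · simpa [R] using dens_filter_not_isUniversal_le (κ := Fin (r + C)) (α := Bool) R m
  · refine (sum_le_sum fun i _ => dens_le_dens ?_).trans
      (sum_dens_filter_mem_rowSpan_Iio_castAdd_le r C)
    exact monotone_filter_right _ fun b _ hb => hb.1
  · refine (sum_le_card_nsmul _ _ _ fun i _ => ?_).trans_eq
      (by rw [card_univ, Fintype.card_fin, nsmul_eq_mul])
    refine (dens_le_dens ?_).trans <| dens_filter_mem_rowSpan_and_isUniversal_le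
      (notMem_Iio_self (b := i.natAdd r)) (by simp) (by simpa using hm)
    have hR : R ⊆ Iio (i.natAdd r) := fun k hk => by
      obtain ⟨j, -, rfl⟩ := mem_map.1 hk
      exact mem_Iio.2 (Fin.lt_def.2 (j.isLt.trans_le (Nat.le_add_right r i)))
    exact monotone_filter_right _ fun b _ hb => ⟨hb.1, hb.2.mono hR⟩

lemma natCard_det_signMatrix_eq_zero_div_le {r C m : ℕ} (hm : m ≤ r + C) :
    (Nat.card {b : Fin (r + C) → Fin (r + C) → Bool // (signMatrix (r + C) b).det = 0} : ℝ) /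
        2 ^ ((r + C) ^ 2) ≤
      (r + C).choose m * 2 ^ m * (1 - (1 / 2) ^ m) ^ r +
        ((1 / 2) ^ C + C * (m.choose (m / 2) / 2 ^ m)) := by
  classical
  have hdens := NNRat.cast_le (K := ℝ) |>.2 (dens_filter_det_signMatrix_eq_zero_le hm)
  have hle : (1 / 2 : ℚ≥0) ^ m ≤ 1 := pow_le_one₀ (by positivity) one_half_lt_one.le
  have hsub : ((1 - (1 / 2) ^ m : ℚ≥0) : ℝ) = 1 - (1 / 2) ^ m :=
    eq_sub_of_add_eq (by simpa using congrArg ((↑) : ℚ≥0 → ℝ) (tsub_add_cancel_of_le hle))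
  push_cast [hsub] at hdens
  simpa [nnratCast_dens, Fintype.card_subtype, ← pow_mul, sq] using hdens

end SignMatrix

/-- The probability that a uniformly random `n × n` `±1` matrix is singular is `o(1)`. -/
theorem prob_random_sign_matrix_singular_small :
    ∀ δ > (0 : ℝ), ∃ N : ℕ, ∀ n ≥ N,
      (Nat.card {b : Fin n → Fin n → Bool // (signMatrix n b).det = 0} : ℝ) / 2 ^ (n ^ 2) ≤ δ := by
  intro δ hδ
  have hδ₃ : 0 < δ / 3 := by positivity
  obtain ⟨C, hC⟩ := exists_pow_lt_of_lt_one hδ₃ (one_half_lt_one (α := ℝ))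
  obtain ⟨m, hm⟩ := (tendsto_choose_half_div_two_pow.const_mul (C : ℝ)).eventually_lt_const
    (by rwa [mul_zero]) |>.exists
  have hpow_le : (1 / 2 : ℝ) ^ m ≤ 1 := pow_le_one₀ (by positivity) one_half_lt_one.le
  have hpow_pos : (0 : ℝ) < (1 / 2) ^ m := by positivity
  have hlim := (tendsto_add_choose_mul_const_pow_of_lt_one C m (sub_nonneg.2 hpow_le)
    (sub_lt_self 1 hpow_pos)).const_mul (2 ^ m : ℝ)
  obtain ⟨J, hJ⟩ := eventually_atTop.1 (hlim.eventually_lt_const (by rwa [mul_zero] : _ < δ / 3))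
  refine ⟨J + m + C, fun n hn => ?_⟩
  obtain ⟨r, rfl⟩ := Nat.exists_eq_add_of_le' ((Nat.le_add_left C (J + m)).trans hn)
  calc (Nat.card {b : Fin (r + C) → Fin (r + C) → Bool // (signMatrix (r + C) b).det = 0} : ℝ) /
        2 ^ ((r + C) ^ 2)
      ≤ (r + C).choose m * 2 ^ m * (1 - (1 / 2) ^ m) ^ r +
          ((1 / 2) ^ C + C * (m.choose (m / 2) / 2 ^ m)) :=
        natCard_det_signMatrix_eq_zero_div_le (by omega)
    _ ≤ δ / 3 + (δ / 3 + δ / 3) := by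
        gcongr
        linarith [hJ r (by omega)]
    _ = δ := by ring
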